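/- For any ε∈[0,1] and states ρ,σ, the hypothesis testing relative entropy satisfies D_H^ε(ρ‖σ) ≤ (D(ρ‖σ) + h(ε))/(1−ε) for ε<1, i.e. the ε-hypothesis testing relative entropy is upper bounded in terms of the Umegaki relative entropy, where h is the binary entropy; equivalently, the weak converse bound min over tests M with Tr Mρ ≥ 1−ε of −log Tr Mσ is at most (D(ρ‖σ)+1)/(1−ε). -/

import Mathlib

open scoped BigOperators ComplexOrder
noncomputable section

variable {ι : Type*} [Fintype ι] [DecidableEq ι]

def IsDensity (ρ : Matrix ι ι ℂ) : Prop := ρ.PosSemidef ∧ ρ.trace = 1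

/-- Matrix logarithm via the functional calculus (junk value `0` off Hermitians). -/
def mlog (A : Matrix ι ι ℂ) : Matrix ι ι ℂ :=
  if h : A.IsHermitian then h.cfc Real.log else 0

def SuppLE (ρ σ : Matrix ι ι ℂ) : Prop := ∀ v, σ.mulVec v = 0 → ρ.mulVec v = 0

/-- Umegaki relative entropy, `+∞` if the support condition fails. -/
def relEnt (ρ σ : Matrix ι ι ℂ) : EReal :=
  @ite _ (SuppLE ρ σ) (Classical.propDecidable _)
    (((ρ * (mlog ρ - mlog σ)).trace.re : ℝ) : EReal) ⊤

/-- Hypothesis testing relative entropy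
`D_H^ε(ρ‖σ) = -log min{Tr Mσ : 0 ≤ M ≤ 1, Tr Mρ ≥ 1-ε}`. -/
def DH (ε : ℝ) (ρ σ : Matrix ι ι ℂ) : ℝ :=
  - Real.log (sInf {t : ℝ | ∃ M : Matrix ι ι ℂ, M.PosSemidef ∧ (1 - M).PosSemidef ∧
      1 - ε ≤ (ρ * M).trace.re ∧ t = (σ * M).trace.re})

/-- The binary entropy function `h(ε)`. -/
def binEnt (ε : ℝ) : ℝ := -(ε * Real.log ε) - (1 - ε) * Real.log (1 - ε)


lemma scalar_key {K : Type*} [Fintype K] (w r s : K → ℝ) (hr : ∀ k, 0 ≤ r k) (hs : ∀ k, 0 ≤ s k)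
    (h0 : ∀ k, w k * r k ≠ 0 → 0 < s k) (hsum : ∑ k, w k * r k = 0)
    (hd : ∀ l : ℝ, 0 < l → 0 ≤ ∑ k, w k * (r k ^ 2 / (s k + l * r k))) :
    ∑ k, w k * r k * Real.log (s k) ≤ ∑ k, w k * r k * Real.log (r k) := by
  set F : ℝ → ℝ := fun l => ∑ k, w k * r k * Real.log (s k + l * r k) with hF
  have hderiv : ∀ l : ℝ, 0 ≤ l →
      HasDerivAt F (∑ k, w k * (r k ^ 2 / (s k + l * r k))) l := by
    intro l hl
    apply HasDerivAt.fun_sum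
    intro k _
    by_cases hk : w k * r k = 0
    · have e : w k * (r k ^ 2 / (s k + l * r k)) = 0 := by
        rcases mul_eq_zero.1 hk with h | h <;> simp [h]
      rw [e]
      simp only [hk, zero_mul]
      exact hasDerivAt_const _ _
    · have hpos : 0 < s k + l * r k := by
        have := h0 k hk
        have := mul_nonneg hl (hr k)
        linarith
      have h1 : HasDerivAt (fun l : ℝ => s k + l * r k) (r k) l := by
        simpa using ((hasDerivAt_id l).mul_const (r k)).const_add (s k)
      have := (h1.log hpos.ne').const_mul (w k * r k)
      have e : w k * (r k ^ 2 / (s k + l * r k)) = w k * r k * (r k / (s k + l * r k)) := by ring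
      rw [e]
      exact this
  have hmono : MonotoneOn F (Set.Ici 0) := by
    apply monotoneOn_of_deriv_nonneg (convex_Ici 0)
    · intro l hl
      exact (hderiv l hl).continuousAt.continuousWithinAt
    · intro l hl
      rw [interior_Ici] at hl
      exact (hderiv l (le_of_lt hl)).differentiableAt.differentiableWithinAt
    · intro l hl
      rw [interior_Ici] at hl
      rw [(hderiv l (le_of_lt hl)).deriv]
      exact hd l hl
  have hlim : Filter.Tendsto F Filter.atTop (nhds (∑ k, w k * r k * Real.log (r k))) := by
    have h1 : Filter.Tendsto (fun l : ℝ => ∑ k, w k * r k * (Real.log (s k * l⁻¹ + r k)))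
        Filter.atTop (nhds (∑ k, w k * r k * Real.log (r k))) := by
      apply tendsto_finsetSum
      intro k _
      by_cases hk : w k * r k = 0
      · simp [hk]
      · have hrk : r k ≠ 0 := right_ne_zero_of_mul hk
        apply Filter.Tendsto.const_mul
        have h2 : Filter.Tendsto (fun l : ℝ => s k * l⁻¹ + r k) Filter.atTop (nhds (r k)) := by
          simpa using (tendsto_inv_atTop_zero.const_mul (s k)).add_const (r k)
        exact h2.log hrk
    refine h1.congr' ?_
    filter_upwards [Filter.eventually_gt_atTop (0 : ℝ)] with l hl
    have h3 : ∀ k, w k * r k * Real.log (s k * l⁻¹ + r k) =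
        w k * r k * Real.log (s k + l * r k) - w k * r k * Real.log l := by
      intro k
      by_cases hk : w k * r k = 0
      · simp [hk]
      · have hpos : 0 < s k + l * r k := by
          have := h0 k hk
          have := mul_nonneg hl.le (hr k)
          linarith
        have : s k * l⁻¹ + r k = (s k + l * r k) / l := by field_simp
        rw [this, Real.log_div hpos.ne' hl.ne']
        ring
    simp only [h3, Finset.sum_sub_distrib, ← Finset.sum_mul, hsum, hF]
    simp
  have h4 : F 0 ≤ ∑ k, w k * r k * Real.log (r k) := by
    refine ge_of_tendsto hlim ?_
    filter_upwards [Filter.eventually_ge_atTop (0 : ℝ)] with l hl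
    exact hmono (Set.mem_Ici.2 le_rfl) (Set.mem_Ici.2 hl) hl
  simpa [hF] using h4

lemma psd_sub_sq {M : Matrix ι ι ℂ} (hM : M.PosSemidef) (hN : (1 - M).PosSemidef) :
    (M - M * M).PosSemidef := by
  have h1 := hN.mul_mul_conjTranspose_same M
  have h2 := hM.mul_mul_conjTranspose_same (1 - M)
  rw [hM.1.eq] at h1
  rw [hN.1.eq] at h2
  convert h1.add h2 using 1
  noncomm_ring

lemma quad_point (r s l : ℝ) (hr : 0 ≤ r) (hs : 0 ≤ s) (hl : 0 < l) (c y : ℂ) :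
    2 * (r * (y * star c).re) - (s * Complex.normSq y + l * (r * Complex.normSq y)) ≤
      Complex.normSq c * (r ^ 2 / (s + l * r)) := by
  rcases hr.eq_or_lt with h | h
  · subst h
    have := mul_nonneg hs (Complex.normSq_nonneg y)
    simp; linarith
  · have hd : 0 < s + l * r := by positivity
    rw [mul_div_assoc', le_div_iff₀ hd]
    simp only [Complex.normSq_apply, Complex.mul_re, Complex.star_def, Complex.conj_re,
      Complex.conj_im]
    nlinarith [sq_nonneg (r * c.re - (s + l * r) * y.re), sq_nonneg (r * c.im - (s + l * r) * y.im)]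

section aux

variable (U V : Matrix ι ι ℂ) (r s : ι → ℝ)

def dg (U : Matrix ι ι ℂ) (r : ι → ℝ) : Matrix ι ι ℂ :=
  U * Matrix.diagonal (fun i => (r i : ℂ)) * U.conjTranspose

lemma trace_dg_mul (X : Matrix ι ι ℂ) :
    (dg U r * X).trace = ∑ i, (r i : ℂ) * (U.conjTranspose * X * U) i i := by
  have : (dg U r * X).trace =
      (Matrix.diagonal (fun i => (r i : ℂ)) * (U.conjTranspose * X * U)).trace := by
    unfold dg
    rw [Matrix.mul_assoc, Matrix.mul_assoc, Matrix.trace_mul_comm]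
    simp only [Matrix.mul_assoc]
  rw [this, Matrix.trace]
  simp [Matrix.diag, Matrix.diagonal_mul]

lemma mul_conj_diag (A B : Matrix ι ι ℂ) (i : ι) :
    (A * B.conjTranspose) i i = ∑ j, A i j * star (B i j) := by
  simp [Matrix.mul_apply]

/-- `Tr ρ X` -/
lemma tr1 (hV : V * V.conjTranspose = 1) (X : Matrix ι ι ℂ) :
    (dg U r * X).trace.re = ∑ i, ∑ j, r i *
      ((U.conjTranspose * X * V) i j * star ((U.conjTranspose * V) i j)).re := by
  rw [trace_dg_mul]
  have : U.conjTranspose * X * U = (U.conjTranspose * X * V) * (U.conjTranspose * V).conjTranspose := by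
    rw [Matrix.conjTranspose_mul, Matrix.conjTranspose_conjTranspose]
    calc _ = U.conjTranspose * X * 1 * U := by simp
      _ = _ := by rw [← hV]; simp only [Matrix.mul_assoc]
  simp only [this, mul_conj_diag, Complex.re_sum, Complex.re_ofReal_mul, Finset.mul_sum]

lemma tr2 (hV : V * V.conjTranspose = 1) (X : Matrix ι ι ℂ) (hX : X.conjTranspose = X) :
    (dg U r * (X * X)).trace.re = ∑ i, ∑ j, r i *
      Complex.normSq ((U.conjTranspose * X * V) i j) := by
  rw [trace_dg_mul]
  have : U.conjTranspose * (X * X) * U =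
      (U.conjTranspose * X * V) * (U.conjTranspose * X * V).conjTranspose := by
    simp only [Matrix.conjTranspose_mul, Matrix.conjTranspose_conjTranspose, hX]
    calc _ = U.conjTranspose * X * 1 * X * U := by simp [Matrix.mul_assoc]
      _ = _ := by rw [← hV]; simp only [Matrix.mul_assoc]
  simp only [this, mul_conj_diag, Complex.re_sum, Complex.re_ofReal_mul, Finset.mul_sum,
    Complex.star_def, Complex.mul_conj, Complex.ofReal_re]

lemma tr3 (hU : U * U.conjTranspose = 1) (X : Matrix ι ι ℂ) (hX : X.conjTranspose = X) :
    (dg V s * (X * X)).trace.re = ∑ i, ∑ j, s j *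
      Complex.normSq ((U.conjTranspose * X * V) i j) := by
  rw [tr2 V U s hU X hX, Finset.sum_comm]
  refine Finset.sum_congr rfl fun i _ => Finset.sum_congr rfl fun j _ => ?_
  have : (V.conjTranspose * X * U) = (U.conjTranspose * X * V).conjTranspose := by
    simp [Matrix.conjTranspose_mul, hX, Matrix.mul_assoc]
  rw [this, Matrix.conjTranspose_apply, Complex.star_def, Complex.normSq_conj]

lemma quad_bound (hU : U * U.conjTranspose = 1) (hV : V * V.conjTranspose = 1)
    (hr : ∀ i, 0 ≤ r i) (hs : ∀ i, 0 ≤ s i) (X : Matrix ι ι ℂ) (hX : X.conjTranspose = X)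
    (l : ℝ) (hl : 0 < l) :
    2 * (dg U r * X).trace.re - ((dg V s * (X * X)).trace.re + l * (dg U r * (X * X)).trace.re) ≤
    ∑ i, ∑ j, Complex.normSq ((U.conjTranspose * V) i j) * (r i ^ 2 / (s j + l * r i)) := by
  rw [tr1 U V r hV, tr2 U V r hV X hX, tr3 U V s hU X hX]
  simp only [Finset.mul_sum, ← Finset.sum_add_distrib, ← Finset.sum_sub_distrib]
  exact Finset.sum_le_sum fun i _ => Finset.sum_le_sum fun j _ =>
    quad_point _ _ _ (hr i) (hs j) hl _ _

lemma tr_log (hU' : U.conjTranspose * U = 1) (hV : V * V.conjTranspose = 1) (g k : ι → ℝ) :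
    (dg U r * (dg U g - dg V k)).trace.re =
      ∑ i, ∑ j, Complex.normSq ((U.conjTranspose * V) i j) * r i * (g i - k j) := by
  have h1 : U.conjTranspose * dg V k * V =
     (U.conjTranspose * V) * Matrix.diagonal (fun i => (k i : ℂ)) * (V.conjTranspose * V) := by
    simp only [dg, Matrix.mul_assoc]
  have h2 : V.conjTranspose * V = 1 := mul_eq_one_comm.1 hV
  have h3 : U.conjTranspose * dg U g * V =
     (U.conjTranspose * U) * Matrix.diagonal (fun i => (g i : ℂ)) * (U.conjTranspose * V) := by
    simp only [dg, Matrix.mul_assoc]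
  rw [tr1 U V r hV, Matrix.mul_sub, Matrix.sub_mul, h1, h2, h3, hU', Matrix.one_mul, Matrix.mul_one]
  refine Finset.sum_congr rfl fun i _ => Finset.sum_congr rfl fun j _ => ?_
  rw [Matrix.sub_apply, Matrix.mul_diagonal, Matrix.diagonal_mul]
  simp only [Complex.normSq_apply, Complex.mul_re, Complex.star_def, Complex.conj_re,
      Complex.conj_im, Complex.sub_re, Complex.sub_im, Complex.mul_im, Complex.ofReal_re,
      Complex.ofReal_im]
  ring

lemma supp_dg (hU' : U.conjTranspose * U = 1) (hV' : V.conjTranspose * V = 1)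
    (h : SuppLE (dg U r) (dg V s)) (i j : ι) (hj : s j = 0) :
    (r i : ℂ) * (U.conjTranspose * V) i j = 0 := by
  have h1 : dg V s * V = V * Matrix.diagonal (fun i => (s i : ℂ)) := by
    simp only [dg, Matrix.mul_assoc, hV', Matrix.mul_one]
  have h2 : (dg V s).mulVec (fun a => V a j) = 0 := by
    ext a
    have := congrFun (congrFun h1 a) j
    rw [Matrix.mul_diagonal, hj] at this
    simpa [Matrix.mul_apply, Matrix.mulVec, dotProduct] using this
  have h3 := h _ h2
  have h4 : U.conjTranspose * (dg U r * V) = Matrix.diagonal (fun i => (r i : ℂ)) * (U.conjTranspose * V) := by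
    simp only [dg, ← Matrix.mul_assoc, hU', Matrix.one_mul]
  have h5 := congrFun (congrFun h4 i) j
  rw [Matrix.diagonal_mul] at h5
  rw [← h5, Matrix.mul_apply]
  refine Finset.sum_eq_zero fun a _ => ?_
  have h6 : (dg U r * V) a j = 0 := by
    simpa [Matrix.mul_apply, Matrix.mulVec, dotProduct] using congrFun h3 a
  rw [h6, mul_zero]

lemma exists_dg (A : Matrix ι ι ℂ) (hA : A.PosSemidef) : ∃ (U : Matrix ι ι ℂ) (r : ι → ℝ),
    U * U.conjTranspose = 1 ∧ U.conjTranspose * U = 1 ∧ (∀ i, 0 ≤ r i) ∧ A = dg U r ∧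
    mlog A = dg U (fun i => Real.log (r i)) := by
  refine ⟨hA.1.eigenvectorUnitary, hA.1.eigenvalues, ?_, ?_, hA.eigenvalues_nonneg, ?_, ?_⟩
  · exact Unitary.coe_mul_star_self _
  · exact Unitary.coe_star_mul_self _
  · conv_lhs => rw [hA.1.spectral_theorem]
    rfl
  · rw [mlog, dif_pos hA.1]
    rfl

end aux

lemma psd_trace_mul_nonneg {A B : Matrix ι ι ℂ} (hA : A.PosSemidef) (hB : B.PosSemidef) :
    0 ≤ (A * B).trace.re := by
  obtain ⟨U, r, -, -, hr, rfl, -⟩ := exists_dg A hA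
  rw [trace_dg_mul, Complex.re_sum]
  refine Finset.sum_nonneg fun i _ => ?_
  rw [Complex.re_ofReal_mul]
  have h := (hB.conjTranspose_mul_mul_same U).diag_nonneg (i := i)
  exact mul_nonneg (hr i) (Complex.le_def.1 h).1

lemma tr_mix (A M : Matrix ι ι ℂ) (hA : IsDensity A) (x y : ℝ) :
    (A * (x • M + y • (1 - M))).trace.re =
      x * (A * M).trace.re + y * (1 - (A * M).trace.re) := by
  simp [Matrix.mul_add, Matrix.mul_sub, Matrix.trace_add, Matrix.trace_sub, Matrix.trace_smul, hA.2]

lemma tr_mix_sq (A M : Matrix ι ι ℂ) (hA : IsDensity A) (hM : M.PosSemidef)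
    (hN : (1 - M).PosSemidef) (x y : ℝ) :
    (A * ((x • M + y • (1 - M)) * (x • M + y • (1 - M)))).trace.re ≤
      x ^ 2 * (A * M).trace.re + y ^ 2 * (1 - (A * M).trace.re) := by
  have e : (x • M + y • (1 - M)) * (x • M + y • (1 - M)) =
      (x ^ 2 • M + y ^ 2 • (1 - M)) - (x - y) ^ 2 • (M - M * M) := by
    simp only [add_mul, mul_add, smul_mul_assoc, mul_smul_comm, smul_smul, mul_sub, sub_mul,
      one_mul, mul_one]
    module
  rw [e, Matrix.mul_sub, Matrix.trace_sub, Complex.sub_re, tr_mix A M hA]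
  have h := psd_trace_mul_nonneg hA.1 (psd_sub_sq hM hN)
  have : (A * ((x - y) ^ 2 • (M - M * M))).trace.re =
      (x - y) ^ 2 * (A * (M - M * M)).trace.re := by
    rw [Matrix.mul_smul, Matrix.trace_smul, Complex.smul_re, smul_eq_mul]
  rw [this]
  have := mul_nonneg (sq_nonneg (x - y)) h
  linarith

/-- Data processing for a two-outcome measurement (dropping a nonnegative term). -/
lemma dpi (ρ σ M : Matrix ι ι ℂ) (hρ : IsDensity ρ) (hσ : IsDensity σ) (hS : SuppLE ρ σ)
    (hM : M.PosSemidef) (hN : (1 - M).PosSemidef) (p q : ℝ) (hp : p = (ρ * M).trace.re)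
    (hq : q = (σ * M).trace.re) (hq0 : 0 < q) :
    p * Real.log p + (1 - p) * Real.log (1 - p) - p * Real.log q ≤
      (ρ * (mlog ρ - mlog σ)).trace.re := by
  have hp0 : 0 ≤ p := hp ▸ psd_trace_mul_nonneg hρ.1 hM
  have hp1 : 0 ≤ 1 - p := by
    have := psd_trace_mul_nonneg hρ.1 hN
    rw [Matrix.mul_sub, Matrix.trace_sub, Matrix.mul_one, hρ.2, Complex.sub_re, ← hp] at this
    simpa using this
  obtain ⟨U, r, hU, hU', hr, eρ, lρ⟩ := exists_dg ρ hρ.1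
  obtain ⟨V, s, hV, hV', hs, eσ, lσ⟩ := exists_dg σ hσ.1
  have hD : (ρ * (mlog ρ - mlog σ)).trace.re = ∑ i, ∑ j,
      Complex.normSq ((U.conjTranspose * V) i j) * r i * (Real.log (r i) - Real.log (s j)) := by
    rw [lρ, lσ, eρ]
    exact tr_log U V r hU' hV _ _
  have h1 : ∑ i, ∑ j, Complex.normSq ((U.conjTranspose * V) i j) * r i = 1 := by
    have := tr1 U V r hV 1
    rw [← eρ, Matrix.mul_one, hρ.2, Matrix.mul_one] at this
    rw [Complex.one_re] at this
    rw [this]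
    refine Finset.sum_congr rfl fun i _ => Finset.sum_congr rfl fun j _ => ?_
    rw [Complex.star_def, Complex.mul_conj, Complex.ofReal_re, mul_comm]
  have key := scalar_key (K := (ι × ι) ⊕ Bool)
    (Sum.elim (fun k => Complex.normSq ((U.conjTranspose * V) k.1 k.2)) (fun _ => -1))
    (Sum.elim (fun k => r k.1) (fun b => if b then p else 1 - p))
    (Sum.elim (fun k => s k.2) (fun b => if b then q else 1)) ?_ ?_ ?_ ?_ ?_
  · simp only [Fintype.sum_sum_type, Sum.elim_inl, Sum.elim_inr, Fintype.sum_bool,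
      Fintype.sum_prod_type, if_true, Bool.false_eq_true, if_false, Real.log_one] at key
    rw [hD]
    simp only [mul_sub, Finset.sum_sub_distrib] at key ⊢
    linarith
  · rintro (k | b)
    · exact hr _
    · cases b <;> simp <;> linarith
  · rintro (k | b)
    · exact hs _
    · cases b <;> simp <;> linarith
  · rintro (⟨i, j⟩ | b)
    · intro h
      refine lt_of_le_of_ne (hs j) fun h0 => h ?_
      have := supp_dg U V r s hU' hV' (eρ ▸ eσ ▸ hS) i j h0.symm
      rcases mul_eq_zero.1 this with h2 | h2
      · have : r i = 0 := by exact_mod_cast h2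
        simp [this]
      · simp [h2]
    · intro _
      cases b <;> simp <;> linarith
  · simp only [Fintype.sum_sum_type, Sum.elim_inl, Sum.elim_inr, Fintype.sum_bool,
      Fintype.sum_prod_type, if_true, Bool.false_eq_true, if_false, h1]
    ring
  · intro l hl
    simp only [Fintype.sum_sum_type, Sum.elim_inl, Sum.elim_inr, Fintype.sum_bool,
      Fintype.sum_prod_type, if_true, Bool.false_eq_true, if_false]
    have d1 : 0 < q + l * p := by positivity
    have d2 : 0 < 1 + l * (1 - p) := by positivity
    set x := p / (q + l * p) with hx
    set y := (1 - p) / (1 + l * (1 - p)) with hy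
    have ex : p ^ 2 / (q + l * p) = 2 * x * p - x ^ 2 * (q + l * p) := by
      rw [hx]; field_simp; ring
    have ey : (1 - p) ^ 2 / (1 + l * (1 - p)) =
        2 * y * (1 - p) - y ^ 2 * (1 + l * (1 - p)) := by
      rw [hy]; field_simp; ring
    have hX : (x • M + y • (1 - M)).conjTranspose = x • M + y • (1 - M) := by
      simp [Matrix.conjTranspose_add, Matrix.conjTranspose_smul, hM.1.eq]
    have qb := quad_bound U V r s hU hV hr hs _ hX l hl
    rw [← eρ, ← eσ, tr_mix ρ M hρ, ← hp] at qb
    have a1 := tr_mix_sq ρ M hρ hM hN x y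
    have a2 := tr_mix_sq σ M hσ hM hN x y
    rw [← hp] at a1
    rw [← hq] at a2
    have a3 := mul_le_mul_of_nonneg_left a1 hl.le
    have a4 : 0 ≤ y ^ 2 * q := by positivity
    rw [ex, ey]
    nlinarith

lemma relEnt_nonneg (ρ σ : Matrix ι ι ℂ) (hρ : IsDensity ρ) (hσ : IsDensity σ)
    (hS : SuppLE ρ σ) : 0 ≤ (ρ * (mlog ρ - mlog σ)).trace.re := by
  have h := dpi ρ σ 1 hρ hσ hS Matrix.PosSemidef.one (by simpa using Matrix.PosSemidef.zero) 1 1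
    (by simp [hρ.2]) (by simp [hσ.2]) one_pos
  simpa using h

/-- The bound for one test. -/
lemma one_test (ρ σ M : Matrix ι ι ℂ) (hρ : IsDensity ρ) (hσ : IsDensity σ) (hS : SuppLE ρ σ)
    (ε : ℝ) (hε1 : ε < 1) (hM : M.PosSemidef) (hN : (1 - M).PosSemidef)
    (h : 1 - ε ≤ (ρ * M).trace.re) (hq0 : 0 < (σ * M).trace.re) :
    (1 - ε) * (-Real.log (σ * M).trace.re) ≤ (ρ * (mlog ρ - mlog σ)).trace.re + binEnt ε := by
  set p := (ρ * M).trace.re with hp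
  set q := (σ * M).trace.re with hq
  have he : 0 < 1 - ε := by linarith
  have hp0 : 0 < p := by linarith
  set c := (1 - ε) / p with hc
  have hc0 : 0 < c := by positivity
  have hc1 : c ≤ 1 := by rw [hc, div_le_one hp0]; exact h
  have hM' : (c • M).PosSemidef := hM.smul hc0.le
  have hN' : (1 - c • M).PosSemidef := by
    have := hN.add (hM.smul (sub_nonneg.2 hc1))
    convert this using 1
    module
  have h1 := dpi ρ σ (c • M) hρ hσ hS hM' hN' (1 - ε) (c * q)
    (by rw [Matrix.mul_smul, Matrix.trace_smul, Complex.smul_re, smul_eq_mul, ← hp, hc]; field_simp)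
    (by rw [Matrix.mul_smul, Matrix.trace_smul, Complex.smul_re, smul_eq_mul]) (by positivity)
  have h2 : Real.log (c * q) ≤ Real.log q := Real.log_le_log (by positivity) (by nlinarith)
  have h3 := mul_le_mul_of_nonneg_left h2 he.le
  rw [sub_sub_cancel] at h1
  unfold binEnt
  linarith

lemma binEnt_eq (ε : ℝ) : binEnt ε = Real.binEntropy ε := by
  unfold binEnt Real.binEntropy
  rw [Real.log_inv, Real.log_inv]
  ring

lemma DH_real (ρ σ : Matrix ι ι ℂ) (hρ : IsDensity ρ) (hσ : IsDensity σ) (hS : SuppLE ρ σ)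
    (ε : ℝ) (hε0 : 0 ≤ ε) (hε1 : ε < 1) :
    DH ε ρ σ ≤ ((ρ * (mlog ρ - mlog σ)).trace.re + binEnt ε) * (1 - ε)⁻¹ := by
  have he : 0 < 1 - ε := by linarith
  have hD := relEnt_nonneg ρ σ hρ hσ hS
  have hb : 0 ≤ binEnt ε := binEnt_eq ε ▸ Real.binEntropy_nonneg hε0 hε1.le
  unfold DH
  set S := {t : ℝ | ∃ M : Matrix ι ι ℂ, M.PosSemidef ∧ (1 - M).PosSemidef ∧
      1 - ε ≤ (ρ * M).trace.re ∧ t = (σ * M).trace.re} with hSdef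
  have hne : S.Nonempty := ⟨_, 1, Matrix.PosSemidef.one, by simpa using Matrix.PosSemidef.zero,
    by simpa [hρ.2] using hε0, rfl⟩
  have hnn : ∀ t ∈ S, 0 ≤ t := by
    rintro t ⟨M, hM, -, -, rfl⟩
    exact psd_trace_mul_nonneg hσ.1 hM
  have hbdd : BddBelow S := ⟨0, fun t ht => hnn t ht⟩
  rcases (le_csInf hne hnn).eq_or_lt with h0 | h0
  · rw [← h0]
    simp only [Real.log_zero, neg_zero]
    positivity
  · rw [neg_le, Real.le_log_iff_exp_le h0]
    refine le_csInf hne ?_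
    intro t ht
    have ht0 : 0 < t := lt_of_lt_of_le h0 (csInf_le hbdd ht)
    obtain ⟨M, hM, hN, h, rfl⟩ := ht
    rw [← Real.le_log_iff_exp_le ht0, neg_le, ← div_eq_mul_inv, le_div_iff₀ he, mul_comm]
    exact one_test ρ σ M hρ hσ hS ε hε1 hM hN h ht0

/-- **weak converse bound.** For states `ρ, σ` and `ε ∈ [0,1)`,
`D_H^ε(ρ‖σ) ≤ (D(ρ‖σ) + h(ε))/(1-ε)`; in particular it is at most `(D(ρ‖σ) + 1)/(1-ε)`. -/
theorem DH_le_relEnt_weak_converse (ρ σ : Matrix ι ι ℂ)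
    (hρ : IsDensity ρ) (hσ : IsDensity σ) (ε : ℝ) (hε0 : 0 ≤ ε) (hε1 : ε < 1) :
    ((DH ε ρ σ : ℝ) : EReal) ≤ (relEnt ρ σ + ((binEnt ε : ℝ) : EReal)) * (((1 - ε)⁻¹ : ℝ) : EReal) ∧
    ((DH ε ρ σ : ℝ) : EReal) ≤ (relEnt ρ σ + (1 : EReal)) * (((1 - ε)⁻¹ : ℝ) : EReal) := by
  have he : 0 < (1 - ε)⁻¹ := inv_pos.2 (by linarith)
  by_cases hS : SuppLE ρ σ
  · have h1 := DH_real ρ σ hρ hσ hS ε hε0 hε1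
    have hR : relEnt ρ σ = (((ρ * (mlog ρ - mlog σ)).trace.re : ℝ) : EReal) := by
      unfold relEnt
      exact if_pos hS
    have hb : binEnt ε ≤ 1 := by
      rw [binEnt_eq]
      have := Real.log_two_lt_d9
      have := Real.binEntropy_le_log_two (p := ε)
      linarith
    have h2 : DH ε ρ σ ≤ ((ρ * (mlog ρ - mlog σ)).trace.re + 1) * (1 - ε)⁻¹ :=
      h1.trans (mul_le_mul_of_nonneg_right (by linarith) he.le)
    rw [hR]
    exact ⟨by exact_mod_cast h1, by exact_mod_cast h2⟩
  · have hR : relEnt ρ σ = ⊤ := by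
      unfold relEnt
      exact if_neg hS
    have h1 : (⊤ : EReal) + (1 : EReal) = ⊤ := EReal.top_add_coe 1
    rw [hR, h1, EReal.top_add_coe, EReal.top_mul_coe_of_pos he]
    exact ⟨le_top, le_top⟩
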